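/- Let β ∈ ℝ and let (v, w) be an eigenfunction profile of the Euler–Bernoulli chain for β. Assume that one of the following four boundary conditions holds: (i) v(0) = v′(0) = w(0) = 0 and w′(L) = 0; or (ii) v(0) = v′(0) = w′(0) = 0 and w(L) = 0; or (iii) v(0) = w(0) = w′(0) = 0 and v′(L) = 0; or (iv) v′(0) = w(0) = w′(0) = 0 and v(L) = 0. Then v(ζ) = 0 and w(ζ) = 0 for all ζ ∈ [0,L]. -/

import Mathlib

/-!
The idea is positivity of a cooperative system. With `s = ±1` the sign of `β` and `y = s·i·w`, the
eigenvalue equations read `v″ = (|β| / EI) y` and `y″ = |β| ρ v`, so that each real component of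
`x = (v, v′, y, y′)` satisfies a cyclic first-order system `x_k′ = c_k x_{k+1}` whose coefficients
are nonnegative and bounded. Nonnegative initial data therefore stay nonnegative
(`cyclic_nonneg`), and then every `x_k` is nondecreasing; by continuity at the junctions this
passes from one subinterval to the next (`chain_mono`).

Each of the four boundary conditions says that three of the `x_k` vanish at `0` and the remaining
one vanishes at `L`. Up to a sign the initial data are nonnegative, so monotonicity of the remaining
component forces it to vanish at `0` as well. Applying positivity to both `x` and `-x` then gives
`x = 0` (`chain_zero`), with no separate uniqueness theorem and no distinction of the case `β = 0`.
-/

open Set Filter Matrix MeasureTheory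

noncomputable section

/-- Data for a chain of `m` serially connected Euler–Bernoulli beams on `[0,L]`:
a partition `0 = l⁰ < l¹ < … < lᵐ = L` and coefficient functions `ρ, EI` which are
bounded, uniformly positive and Lipschitz continuous on each open subinterval. -/
structure EBData (m : ℕ) where
  l : ℕ → ℝ
  L : ℝ
  rho : ℝ → ℝ
  EI : ℝ → ℝ
  one_le_m : 1 ≤ m
  l_zero : l 0 = 0
  l_last : l m = L
  l_lt : ∀ j < m, l j < l (j + 1)
  eps : ℝ
  eps_pos : 0 < eps
  rho_lb : ∀ ζ ∈ Icc (0 : ℝ) L, eps ≤ rho ζ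
  EI_lb : ∀ ζ ∈ Icc (0 : ℝ) L, eps ≤ EI ζ
  rho_bdd : ∃ C : ℝ, ∀ ζ ∈ Icc (0 : ℝ) L, rho ζ ≤ C
  EI_bdd : ∃ C : ℝ, ∀ ζ ∈ Icc (0 : ℝ) L, EI ζ ≤ C
  rho_lip : ∀ j < m, ∃ K : NNReal, LipschitzOnWith K rho (Ioo (l j) (l (j + 1)))
  EI_lip : ∀ j < m, ∃ K : NNReal, LipschitzOnWith K EI (Ioo (l j) (l (j + 1)))


/-- An eigenfunction profile `(v, w)` of the Euler–Bernoulli chain for the frequency `β`: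
`v, w` are `C¹` on `[0,L]` and `C²` on each closed subinterval `[lʲ, lʲ⁺¹]` (with
one-sided second derivatives `v'' j`, `w'' j` at the endpoints), and satisfy
`iβ ρ v = −w″` and `iβ w = EI v″` on each open subinterval. -/
structure EBProfile {m : ℕ} (d : EBData m) (β : ℝ) where
  v : ℝ → ℂ
  w : ℝ → ℂ
  v' : ℝ → ℂ
  w' : ℝ → ℂ
  v'' : ℕ → ℝ → ℂ
  w'' : ℕ → ℝ → ℂ
  hv' : ∀ ζ ∈ Icc (0 : ℝ) d.L, HasDerivWithinAt v (v' ζ) (Icc (0 : ℝ) d.L) ζ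
  hw' : ∀ ζ ∈ Icc (0 : ℝ) d.L, HasDerivWithinAt w (w' ζ) (Icc (0 : ℝ) d.L) ζ
  cont_v' : ContinuousOn v' (Icc (0 : ℝ) d.L)
  cont_w' : ContinuousOn w' (Icc (0 : ℝ) d.L)
  hv'' : ∀ j < m, ∀ ζ ∈ Icc (d.l j) (d.l (j + 1)),
    HasDerivWithinAt v' (v'' j ζ) (Icc (d.l j) (d.l (j + 1))) ζ
  hw'' : ∀ j < m, ∀ ζ ∈ Icc (d.l j) (d.l (j + 1)),
    HasDerivWithinAt w' (w'' j ζ) (Icc (d.l j) (d.l (j + 1))) ζ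
  cont_v'' : ∀ j < m, ContinuousOn (v'' j) (Icc (d.l j) (d.l (j + 1)))
  cont_w'' : ∀ j < m, ContinuousOn (w'' j) (Icc (d.l j) (d.l (j + 1)))
  ode_v : ∀ j < m, ∀ ζ ∈ Ioo (d.l j) (d.l (j + 1)),
    Complex.I * (β : ℂ) * (d.rho ζ : ℂ) * v ζ = -(w'' j ζ)
  ode_w : ∀ j < m, ∀ ζ ∈ Ioo (d.l j) (d.l (j + 1)),
    Complex.I * (β : ℂ) * w ζ = (d.EI ζ : ℂ) * v'' j ζ

/-- Positivity of a cyclic linear system with nonnegative coefficients. If the minimum `M` of all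
`exp (-2Kt) x_k(t)` were negative, attained at `(k, t)`, then `x_k - (M/2) exp (2K·)` would be
nondecreasing, positive at `a` and negative at `t`. -/
lemma cyclic_nonneg {a b K : ℝ} (hab : a ≤ b) (x c : Fin 4 → ℝ → ℝ)
    (hx : ∀ k, ContinuousOn (x k) (Icc a b))
    (hd : ∀ k, ∀ t ∈ Ioo a b, HasDerivAt (x k) (c k t * x (k + 1) t) t)
    (hc0 : ∀ k, ∀ t ∈ Ioo a b, 0 ≤ c k t) (hcK : ∀ k, ∀ t ∈ Ioo a b, c k t ≤ K)
    (h0 : ∀ k, 0 ≤ x k a) : ∀ k, ∀ t ∈ Icc a b, 0 ≤ x k t := by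
  have hmin : ∀ k, ∃ t ∈ Icc a b, ∀ s ∈ Icc a b,
      Real.exp (-(2 * K * t)) * x k t ≤ Real.exp (-(2 * K * s)) * x k s := by
    intro k
    have hcont : ContinuousOn (fun t => Real.exp (-(2 * K * t)) * x k t) (Icc a b) :=
      ContinuousOn.mul (by fun_prop) (hx k)
    obtain ⟨t, ht, hm⟩ := isCompact_Icc.exists_isMinOn (nonempty_Icc.2 hab) hcont
    exact ⟨t, ht, fun s hs => hm hs⟩
  choose τ hτ hτmin using hmin
  obtain ⟨k, hk⟩ := Finite.exists_min (fun k => Real.exp (-(2 * K * τ k)) * x k (τ k))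
  set M := Real.exp (-(2 * K * τ k)) * x k (τ k) with hM
  have hexp : ∀ s : ℝ, Real.exp (2 * K * s) * Real.exp (-(2 * K * s)) = 1 := by
    intro s
    rw [← Real.exp_add]; simp
  have hlow : ∀ j, ∀ s ∈ Icc a b, M * Real.exp (2 * K * s) ≤ x j s := by
    intro j s hs
    have h1 := mul_le_mul_of_nonneg_left ((hk j).trans (hτmin j s hs))
      (Real.exp_pos (2 * K * s)).le
    have h2 : Real.exp (2 * K * s) * (Real.exp (-(2 * K * s)) * x j s) = x j s := by
      rw [← mul_assoc, hexp, one_mul]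
    rw [h2] at h1
    rwa [mul_comm]
  by_cases hMneg : 0 ≤ M
  · intro j t ht
    exact (mul_nonneg hMneg (Real.exp_pos _).le).trans (hlow j t ht)
  exfalso
  push Not at hMneg
  have hxk : x k (τ k) = M * Real.exp (2 * K * τ k) := by
    rw [hM]
    linear_combination (-x k (τ k)) * hexp (τ k)
  have hmono : MonotoneOn (fun t => x k t - M / 2 * Real.exp (2 * K * t)) (Icc a b) := by
    have hder : ∀ t ∈ Ioo a b, HasDerivAt (fun t => x k t - M / 2 * Real.exp (2 * K * t))
        (c k t * x (k + 1) t - M / 2 * (Real.exp (2 * K * t) * (2 * K))) t := by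
      intro t ht
      have h2 : HasDerivAt (fun t : ℝ => 2 * K * t) (2 * K) t := by
        simpa using (hasDerivAt_id t).const_mul (2 * K)
      exact (hd k t ht).sub (h2.exp.const_mul (M / 2))
    refine monotoneOn_of_deriv_nonneg (convex_Icc a b) ((hx k).sub (by fun_prop)) ?_ ?_
    · intro t ht
      rw [interior_Icc] at ht
      exact (hder t ht).differentiableAt.differentiableWithinAt
    · intro t ht
      rw [interior_Icc] at ht
      rw [(hder t ht).deriv]
      have h3 := mul_le_mul_of_nonneg_left (hlow (k + 1) t (Ioo_subset_Icc_self ht)) (hc0 k t ht)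
      have hE : M * Real.exp (2 * K * t) ≤ 0 :=
        mul_nonpos_of_nonpos_of_nonneg hMneg.le (Real.exp_pos _).le
      have h4 := mul_le_mul_of_nonpos_right (hcK k t ht) hE
      linarith
  have h5 := hmono (left_mem_Icc.2 hab) (hτ k) (hτ k).1
  simp only [hxk] at h5
  have h6 := mul_neg_of_neg_of_pos hMneg (Real.exp_pos (2 * K * τ k))
  have h7 := mul_neg_of_neg_of_pos hMneg (Real.exp_pos (2 * K * a))
  linarith [h0 k]

lemma cyclic_mono {a b K : ℝ} (hab : a ≤ b) (x c : Fin 4 → ℝ → ℝ)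
    (hx : ∀ k, ContinuousOn (x k) (Icc a b))
    (hd : ∀ k, ∀ t ∈ Ioo a b, HasDerivAt (x k) (c k t * x (k + 1) t) t)
    (hc0 : ∀ k, ∀ t ∈ Ioo a b, 0 ≤ c k t) (hcK : ∀ k, ∀ t ∈ Ioo a b, c k t ≤ K)
    (h0 : ∀ k, 0 ≤ x k a) : ∀ k, ∀ t ∈ Icc a b, x k a ≤ x k t := by
  have hpos := cyclic_nonneg hab x c hx hd hc0 hcK h0
  intro k t ht
  have hmono : MonotoneOn (x k) (Icc a b) := by
    refine monotoneOn_of_deriv_nonneg (convex_Icc a b) (hx k) ?_ ?_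
    · intro t ht
      rw [interior_Icc] at ht
      exact (hd k t ht).differentiableAt.differentiableWithinAt
    · intro t ht
      rw [interior_Icc] at ht
      rw [(hd k t ht).deriv]
      exact mul_nonneg (hc0 k t ht) (hpos (k + 1) t (Ioo_subset_Icc_self ht))
  exact hmono (left_mem_Icc.2 hab) ht ht.1

lemma EBData.l_le {m : ℕ} (d : EBData m) {i j : ℕ} (hij : i ≤ j) (hj : j ≤ m) :
    d.l i ≤ d.l j := by
  induction j, hij using Nat.le_induction with
  | base => exact le_rfl
  | succ n _ ih => exact (ih (by omega)).trans (d.l_lt n (by omega)).le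

lemma EBData.piece_subset {m : ℕ} (d : EBData m) {j : ℕ} (hj : j < m) :
    Icc (d.l j) (d.l (j + 1)) ⊆ Icc 0 d.L := by
  refine Icc_subset_Icc ?_ ?_
  · rw [← d.l_zero]
    exact d.l_le (Nat.zero_le j) hj.le
  · rw [← d.l_last]
    exact d.l_le hj le_rfl

lemma EBData.L_nonneg {m : ℕ} (d : EBData m) : 0 ≤ d.L := by
  rw [← d.l_zero, ← d.l_last]
  exact d.l_le (Nat.zero_le m) le_rfl

/-- Along the whole chain, nonnegative initial data are a lower bound for the solution: the
components are continuous across the junctions, so `cyclic_mono` propagates piece by piece. -/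
lemma chain_mono {m : ℕ} (d : EBData m) {K : ℝ} (x c : Fin 4 → ℝ → ℝ)
    (hx : ∀ k, ContinuousOn (x k) (Icc 0 d.L))
    (hd : ∀ j < m, ∀ k, ∀ t ∈ Ioo (d.l j) (d.l (j + 1)),
      HasDerivAt (x k) (c k t * x (k + 1) t) t)
    (hc0 : ∀ k, ∀ t ∈ Icc 0 d.L, 0 ≤ c k t) (hcK : ∀ k, ∀ t ∈ Icc 0 d.L, c k t ≤ K)
    (h0 : ∀ k, 0 ≤ x k 0) : ∀ k, ∀ t ∈ Icc 0 d.L, x k 0 ≤ x k t := by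
  have key : ∀ j ≤ m, ∀ k, ∀ t ∈ Icc 0 (d.l j), x k 0 ≤ x k t := by
    intro j
    induction j with
    | zero =>
      intro _ k t ht
      rw [d.l_zero] at ht
      rw [le_antisymm ht.2 ht.1]
    | succ j ih =>
      intro hj k t ht
      have hjm : j < m := hj
      have hl0 : 0 ≤ d.l j := by
        rw [← d.l_zero]
        exact d.l_le (Nat.zero_le j) hjm.le
      have hsub := d.piece_subset hjm
      have hend : ∀ k, x k 0 ≤ x k (d.l j) := fun k =>
        ih hjm.le k (d.l j) ⟨hl0, le_rfl⟩
      rcases le_total t (d.l j) with h | h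
      · exact ih hjm.le k t ⟨ht.1, h⟩
      · exact (hend k).trans (cyclic_mono (d.l_lt j hjm).le x c
          (fun k => (hx k).mono hsub) (hd j hjm)
          (fun k t ht => hc0 k t (hsub (Ioo_subset_Icc_self ht)))
          (fun k t ht => hcK k t (hsub (Ioo_subset_Icc_self ht)))
          (fun k => (h0 k).trans (hend k)) k t ⟨h, ht.2⟩)
  intro k t ht
  exact key m le_rfl k t (by rwa [d.l_last])

/-- A solution of the cyclic system vanishes identically if all components but the `k`-th vanish at
`0` and the `k`-th one vanishes at `L`. -/
lemma chain_zero {m : ℕ} (d : EBData m) {K : ℝ} (x c : Fin 4 → ℝ → ℝ)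
    (hx : ∀ k, ContinuousOn (x k) (Icc 0 d.L))
    (hd : ∀ j < m, ∀ k, ∀ t ∈ Ioo (d.l j) (d.l (j + 1)),
      HasDerivAt (x k) (c k t * x (k + 1) t) t)
    (hc0 : ∀ k, ∀ t ∈ Icc 0 d.L, 0 ≤ c k t) (hcK : ∀ k, ∀ t ∈ Icc 0 d.L, c k t ≤ K)
    (k : Fin 4) (h0 : ∀ j, j ≠ k → x j 0 = 0) (hL : x k d.L = 0) :
    ∀ j, ∀ t ∈ Icc 0 d.L, x j t = 0 := by
  have hpos := chain_mono d x c hx hd hc0 hcK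
  have hneg := chain_mono d (fun k t => -x k t) c (fun k => (hx k).neg)
    (fun j hj k t ht => by simpa only [mul_neg] using (hd j hj k t ht).fun_neg) hc0 hcK
  have hLmem : d.L ∈ Icc 0 d.L := ⟨d.L_nonneg, le_rfl⟩
  have hk0 : x k 0 = 0 := by
    rcases le_total 0 (x k 0) with h | h
    · have h1 : ∀ j, 0 ≤ x j 0 := by
        intro j
        by_cases hj : j = k
        · rwa [hj]
        · rw [h0 j hj]
      linarith [hpos h1 k d.L hLmem]
    · have h1 : ∀ j, 0 ≤ -x j 0 := by
        intro j
        by_cases hj : j = k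
        · rw [hj]; linarith
        · rw [h0 j hj]; simp
      linarith [hneg h1 k d.L hLmem]
  have hall : ∀ j, x j 0 = 0 := by
    intro j
    by_cases hj : j = k
    · rwa [hj]
    · exact h0 j hj
  intro j t ht
  have h1 := hpos (fun j => (hall j).ge) j t ht
  have h2 := hneg (fun j => by simp [hall j]) j t ht
  simp only [hall j] at h1 h2
  linarith

/-- The state `(v, v′, s·i·w, s·i·w′)` of a profile, with `s` a real sign, seen through a real
functional `φ` of `ℂ`. -/
def EBProfile.state {m : ℕ} {d : EBData m} {β : ℝ} (p : EBProfile d β) (s : ℝ)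
    (φ : ℂ →L[ℝ] ℝ) : Fin 4 → ℝ → ℝ :=
  ![fun t => φ (p.v t), fun t => φ (p.v' t),
    fun t => φ ((s : ℂ) * Complex.I * p.w t), fun t => φ ((s : ℂ) * Complex.I * p.w' t)]

/-- The coefficients of the cyclic system satisfied by `EBProfile.state`. -/
def EBData.coeff {m : ℕ} (d : EBData m) (β : ℝ) : Fin 4 → ℝ → ℝ :=
  ![fun _ => 1, fun t => |β| / d.EI t, fun _ => 1, fun t => |β| * d.rho t]

lemma EBProfile.state_hasDerivAt {m : ℕ} {d : EBData m} {β : ℝ} (p : EBProfile d β) {s : ℝ}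
    (hs : s * |β| = β) (hs' : s * β = |β|) (φ : ℂ →L[ℝ] ℝ) :
    ∀ j < m, ∀ k, ∀ t ∈ Ioo (d.l j) (d.l (j + 1)),
      HasDerivAt (p.state s φ k) (d.coeff β k t * p.state s φ (k + 1) t) t := by
  intro j hj k t ht
  have htI := Ioo_subset_Icc_self ht
  have hpn : Icc (d.l j) (d.l (j + 1)) ∈ nhds t := Icc_mem_nhds ht.1 ht.2
  have htL := d.piece_subset hj htI
  have hLn : Icc 0 d.L ∈ nhds t := mem_of_superset hpn (d.piece_subset hj)
  have hφ : ∀ {f : ℝ → ℂ} {f' : ℂ}, HasDerivAt f f' t →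
      HasDerivAt (fun t => φ (f t)) (φ f') t := fun h => φ.hasFDerivAt.comp_hasDerivAt t h
  have hsmul : ∀ (r : ℝ) (z : ℂ), r * φ z = φ ((r : ℂ) * z) := by
    intro r z
    rw [← Complex.real_smul, map_smul, smul_eq_mul]
  have hEI : (d.EI t : ℂ) ≠ 0 := by
    exact_mod_cast (d.eps_pos.trans_le (d.EI_lb t htL)).ne'
  have hsC : (s : ℂ) * ((|β| : ℝ) : ℂ) = (β : ℂ) := by exact_mod_cast hs
  have hsC' : (s : ℂ) * (β : ℂ) = ((|β| : ℝ) : ℂ) := by exact_mod_cast hs'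
  have dv := hφ ((p.hv' t htL).hasDerivAt hLn)
  have dv' := hφ ((p.hv'' j hj t htI).hasDerivAt hpn)
  have dw := hφ (((p.hw' t htL).hasDerivAt hLn).const_mul ((s : ℂ) * Complex.I))
  have dw' := hφ (((p.hw'' j hj t htI).hasDerivAt hpn).const_mul ((s : ℂ) * Complex.I))
  have ov := p.ode_v j hj t ht
  have ow := p.ode_w j hj t ht
  fin_cases k
  · simpa [state, EBData.coeff] using dv
  · have e : p.v'' j t = ((|β| / d.EI t : ℝ) : ℂ) * ((s : ℂ) * Complex.I * p.w t) := by
      rw [Complex.ofReal_div]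
      field_simp
      linear_combination (-1 : ℂ) * ow - Complex.I * p.w t * hsC
    rw [e, ← hsmul] at dv'
    exact dv'
  · simpa [state, EBData.coeff] using dw
  · have e : (s : ℂ) * Complex.I * p.w'' j t = ((|β| * d.rho t : ℝ) : ℂ) * p.v t := by
      rw [Complex.ofReal_mul]
      linear_combination ((s : ℂ) * Complex.I) * ov + (d.rho t : ℂ) * p.v t * hsC'
        - (s : ℂ) * β * d.rho t * p.v t * Complex.I_sq
    rw [e, ← hsmul] at dw'
    exact dw'

lemma EBProfile.state_continuousOn {m : ℕ} {d : EBData m} {β : ℝ} (p : EBProfile d β) (s : ℝ)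
    (φ : ℂ →L[ℝ] ℝ) (k : Fin 4) : ContinuousOn (p.state s φ k) (Icc 0 d.L) := by
  have hv : ContinuousOn p.v (Icc 0 d.L) := fun t ht => (p.hv' t ht).continuousWithinAt
  have hw : ContinuousOn p.w (Icc 0 d.L) := fun t ht => (p.hw' t ht).continuousWithinAt
  fin_cases k
  · exact φ.continuous.comp_continuousOn hv
  · exact φ.continuous.comp_continuousOn p.cont_v'
  · exact φ.continuous.comp_continuousOn (continuousOn_const.mul hw)
  · exact φ.continuous.comp_continuousOn (continuousOn_const.mul p.cont_w')

lemma EBData.coeff_nonneg {m : ℕ} (d : EBData m) (β : ℝ) :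
    ∀ k, ∀ t ∈ Icc 0 d.L, 0 ≤ d.coeff β k t := by
  intro k t ht
  have h1 := d.eps_pos.trans_le (d.EI_lb t ht)
  have h2 := d.eps_pos.trans_le (d.rho_lb t ht)
  fin_cases k
  · exact zero_le_one
  · exact div_nonneg (abs_nonneg β) h1.le
  · exact zero_le_one
  · exact mul_nonneg (abs_nonneg β) h2.le

lemma EBData.coeff_bdd {m : ℕ} (d : EBData m) (β : ℝ) :
    ∃ K, ∀ k, ∀ t ∈ Icc 0 d.L, d.coeff β k t ≤ K := by
  obtain ⟨C, hC⟩ := d.rho_bdd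
  refine ⟨max 1 (max (|β| / d.eps) (|β| * C)), ?_⟩
  intro k t ht
  fin_cases k
  · exact le_max_left _ _
  · exact (div_le_div_of_nonneg_left (abs_nonneg β) d.eps_pos (d.EI_lb t ht)).trans
      ((le_max_left _ _).trans (le_max_right _ _))
  · exact le_max_left _ _
  · exact (mul_le_mul_of_nonneg_left (hC t ht) (abs_nonneg β)).trans
      ((le_max_right _ _).trans (le_max_right _ _))

/-- An eigenfunction profile of the Euler–Bernoulli chain satisfying one
of the four homogeneous boundary condition sets (three conditions at `ζ = 0` and one at
`ζ = L`) vanishes identically on `[0,L]`. -/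
theorem stmt8 {m : ℕ} (d : EBData m) (β : ℝ) (p : EBProfile d β)
    (hbc :
      (p.v 0 = 0 ∧ p.v' 0 = 0 ∧ p.w 0 = 0 ∧ p.w' d.L = 0) ∨
      (p.v 0 = 0 ∧ p.v' 0 = 0 ∧ p.w' 0 = 0 ∧ p.w d.L = 0) ∨
      (p.v 0 = 0 ∧ p.w 0 = 0 ∧ p.w' 0 = 0 ∧ p.v' d.L = 0) ∨
      (p.v' 0 = 0 ∧ p.w 0 = 0 ∧ p.w' 0 = 0 ∧ p.v d.L = 0)) :
    ∀ ζ ∈ Icc (0 : ℝ) d.L, p.v ζ = 0 ∧ p.w ζ = 0 := by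
  obtain ⟨s, hs0, hs, hs'⟩ : ∃ s : ℝ, s ≠ 0 ∧ s * |β| = β ∧ s * β = |β| := by
    rcases le_total 0 β with h | h
    · exact ⟨1, one_ne_zero, by simp [abs_of_nonneg h], by simp [abs_of_nonneg h]⟩
    · exact ⟨-1, by norm_num, by simp [abs_of_nonpos h], by simp [abs_of_nonpos h]⟩
  obtain ⟨K, hcK⟩ := d.coeff_bdd β
  have hzero : ∀ φ : ℂ →L[ℝ] ℝ, ∀ j, ∀ t ∈ Icc 0 d.L, p.state s φ j t = 0 := by
    intro φ
    have main := chain_zero d (p.state s φ) (d.coeff β) (p.state_continuousOn s φ)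
      (p.state_hasDerivAt hs hs' φ) (d.coeff_nonneg β) hcK
    -- the index is the component of the state that is not prescribed at `0`
    rcases hbc with ⟨h1, h2, h3, h4⟩ | ⟨h1, h2, h3, h4⟩ | ⟨h1, h2, h3, h4⟩ | ⟨h1, h2, h3, h4⟩
    · refine main 3 (fun j hj => ?_) (by simp [EBProfile.state, h4])
      fin_cases j <;> simp_all [EBProfile.state]
    · refine main 2 (fun j hj => ?_) (by simp [EBProfile.state, h4])
      fin_cases j <;> simp_all [EBProfile.state]
    · refine main 1 (fun j hj => ?_) (by simp [EBProfile.state, h4])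
      fin_cases j <;> simp_all [EBProfile.state]
    · refine main 0 (fun j hj => ?_) (by simp [EBProfile.state, h4])
      fin_cases j <;> simp_all [EBProfile.state]
  intro ζ hζ
  have hφ : ∀ z : ℂ, (∀ φ : ℂ →L[ℝ] ℝ, φ z = 0) → z = 0 := fun z hz =>
    Complex.ext (by simpa using hz Complex.reCLM) (by simpa using hz Complex.imCLM)
  refine ⟨hφ _ fun φ => hzero φ 0 ζ hζ, ?_⟩
  have hw := hφ ((s : ℂ) * Complex.I * p.w ζ) fun φ => hzero φ 2 ζ hζ
  simpa [hs0] using hw
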